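/- arXiv:1506.06041 — 2 statements merged into one kernel-verified Lean document; each statement's English description precedes it below -/
import Mathlib

section
/- Let G be a Δ-regular finite simple graph of order n ≥ 1. Then the alliance polynomial A(G;x) has exactly Δ+1 nonzero coefficients: A(G;x) = Σ_{i=0}^{Δ} A_{Δ−2i}(G) x^{n+Δ−2i} with A_{−Δ}(G) = n, A_Δ(G) ≥ 1, and if Δ > 0 then for every 1 ≤ i ≤ Δ−1 one has A_{Δ−2i}(G) ≥ n·C(Δ,i)/min{Δ, n−i}, where C(Δ,i) is the binomial coefficient. -/
open Polynomial Finset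

/-- Number of neighbors of `v` inside the set `S` (denoted δ_S(v)). -/
def SimpleGraph.degIn {V : Type*} [Fintype V] [DecidableEq V]
    (G : SimpleGraph V) [DecidableRel G.Adj] (S : Finset V) (v : V) : ℕ :=
  (S.filter (fun u => G.Adj v u)).card

/-- Number of neighbors of `v` outside the set `S` (denoted δ_{S̄}(v)). -/
def SimpleGraph.degOut {V : Type*} [Fintype V] [DecidableEq V]
    (G : SimpleGraph V) [DecidableRel G.Adj] (S : Finset V) (v : V) : ℕ :=
  (Sᶜ.filter (fun u => G.Adj v u)).card

/-- `S` is an exact defensive `k`-alliance in `G`: the induced subgraph `⟨S⟩` is connected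
(in particular `S` is nonempty) and `k = k_S = min_{v ∈ S} (δ_S(v) - δ_{S̄}(v))`. -/
def SimpleGraph.IsExactAlliance {V : Type*} [Fintype V] [DecidableEq V]
    (G : SimpleGraph V) [DecidableRel G.Adj] (S : Finset V) (k : ℤ) : Prop :=
  (G.induce (S : Set V)).Connected ∧
    (∀ v ∈ S, k ≤ (G.degIn S v : ℤ) - (G.degOut S v : ℤ)) ∧
    (∃ v ∈ S, (G.degIn S v : ℤ) - (G.degOut S v : ℤ) = k)

/-- `A_k(G)`: the number of exact defensive `k`-alliances in `G`. -/
noncomputable def SimpleGraph.allianceCoeff {V : Type*} [Fintype V] [DecidableEq V]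
    (G : SimpleGraph V) [DecidableRel G.Adj] (k : ℤ) : ℕ :=
  Set.ncard {S : Finset V | G.IsExactAlliance S k}

/-- The alliance polynomial `A(G;x) = Σ_{k=-Δ}^{Δ} A_k(G) x^{n+k}`, where `n` is the order and
`Δ` the maximum degree of `G`, regarded as a real polynomial. -/
noncomputable def SimpleGraph.alliancePoly {V : Type*} [Fintype V] [DecidableEq V]
    (G : SimpleGraph V) [DecidableRel G.Adj] : Polynomial ℝ :=
  ∑ k ∈ Finset.Icc (-(G.maxDegree : ℤ)) (G.maxDegree : ℤ),
    (G.allianceCoeff k : ℝ) • X ^ (((Fintype.card V : ℤ) + k).toNat)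

namespace AllianceAux

variable {V : Type*} [Fintype V] [DecidableEq V] (G : SimpleGraph V) [DecidableRel G.Adj]

/-- `G` with all edges touching `U` removed. -/
def cut (U : Finset V) : SimpleGraph V where
  Adj a b := G.Adj a b ∧ a ∉ U ∧ b ∉ U
  symm := ⟨fun _ _ h => ⟨h.1.symm, h.2.2, h.2.1⟩⟩
  loopless := ⟨fun _ h => h.1.ne rfl⟩

open Classical in
/-- the component of `v` in `G` minus `U`. -/
noncomputable def comp (U : Finset V) (v : V) : Finset V :=
  ((cut G U).connectedComponentMk v).supp.toFinset

lemma mem_comp {U : Finset V} {v w : V} : w ∈ comp G U v ↔ (cut G U).Reachable w v := by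
  simp [comp]

lemma self_mem_comp {U : Finset V} {v : V} : v ∈ comp G U v := by
  simp [mem_comp]

lemma comp_connected (U : Finset V) (v : V) :
    (G.induce (comp G U v : Set V)).Connected := by
  have h := ((cut G U).connectedComponentMk v).connected_toSimpleGraph
  have h2 : (comp G U v : Set V) = ((cut G U).connectedComponentMk v).supp := by simp [comp]
  rw [h2]
  refine SimpleGraph.Connected.mono ?_ h
  intro a b hab
  exact hab.1

lemma comp_disjoint {U : Finset V} {v w : V} (hv : v ∉ U) (hw : w ∈ comp G U v) : w ∉ U := by
  rw [mem_comp] at hw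
  obtain ⟨p⟩ := hw
  cases p with
  | nil => exact hv
  | cons h _ => exact h.2.1

lemma comp_out {U : Finset V} {v a b : V} (hv : v ∉ U) (ha : a ∈ comp G U v)
    (hb : b ∉ comp G U v) (hab : G.Adj a b) : b ∈ U := by
  by_contra hbU
  have haU := comp_disjoint G hv ha
  apply hb
  rw [mem_comp] at ha ⊢
  exact (SimpleGraph.Adj.reachable (show (cut G U).Adj b a from ⟨hab.symm, hbU, haU⟩)).trans ha

lemma deg_add {Δ : ℕ} (hreg : G.IsRegularOfDegree Δ) (S : Finset V) (v : V) :
    G.degIn S v + G.degOut S v = Δ := by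
  rw [← hreg v, SimpleGraph.degIn, SimpleGraph.degOut, ← G.card_neighborFinset_eq_degree,
    ← Finset.card_union_of_disjoint]
  · congr 1
    ext w
    by_cases w ∈ S <;> simp [*]
  · exact Finset.disjoint_filter_filter disjoint_compl_right

lemma out_eq {U : Finset V} {v : V} (hU : U ⊆ G.neighborFinset v) :
    (comp G U v)ᶜ.filter (fun u => G.Adj v u) = U := by
  have hv : v ∉ U := fun h => by simpa using hU h
  ext w
  simp only [mem_filter, mem_compl]
  constructor
  · rintro ⟨h1, h2⟩
    exact comp_out G hv (self_mem_comp G) h1 h2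
  · intro h
    exact ⟨fun hw => comp_disjoint G hv hw h, by simpa using hU h⟩

lemma comp_alliance {Δ : ℕ} (hreg : G.IsRegularOfDegree Δ) {U : Finset V} {v : V}
    (hU : U ⊆ G.neighborFinset v) :
    G.IsExactAlliance (comp G U v) ((Δ : ℤ) - 2 * (U.card : ℕ)) := by
  have hv : v ∉ U := fun h => by simpa using hU h
  refine ⟨comp_connected G U v, ?_, v, self_mem_comp G, ?_⟩
  · intro w hw
    have h1 := deg_add G hreg (comp G U v) w
    have h2 : G.degOut (comp G U v) w ≤ U.card := by
      apply Finset.card_le_card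
      intro b hb
      simp only [mem_filter, mem_compl] at hb
      exact comp_out G hv hw hb.1 hb.2
    omega
  · have h1 := deg_add G hreg (comp G U v) v
    have h2 : G.degOut (comp G U v) v = U.card := by
      rw [SimpleGraph.degOut, out_eq G hU]
    omega

lemma top_coeff [Nonempty V] {Δ : ℕ} (hreg : G.IsRegularOfDegree Δ) :
    1 ≤ G.allianceCoeff (Δ : ℤ) := by
  obtain ⟨v⟩ := ‹Nonempty V›
  rw [SimpleGraph.allianceCoeff, Nat.one_le_iff_ne_zero, ← Nat.pos_iff_ne_zero, Set.ncard_pos]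
  exact ⟨_, by simpa using comp_alliance G hreg (Finset.empty_subset (G.neighborFinset v))⟩

lemma same_cut {U U' : Finset V} {v v' : V}
    (hU : U ⊆ G.neighborFinset v) (hU' : U' ⊆ G.neighborFinset v') (hc : U.card = U'.card)
    (h : comp G U v = comp G U' v') : U = U' := by
  have hv' : v' ∉ U' := fun h => by simpa using hU' h
  apply Finset.eq_of_subset_of_card_le _ hc.ge
  rw [← out_eq G hU]
  intro b hb
  rw [h] at hb
  simp only [mem_filter, mem_compl] at hb
  exact comp_out G hv' (h ▸ self_mem_comp G) hb.1 hb.2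

lemma count {Δ : ℕ} (hreg : G.IsRegularOfDegree Δ) {i : ℕ} (hi : 1 ≤ i) :
    Fintype.card V * Δ.choose i ≤
      min Δ (Fintype.card V - i) * G.allianceCoeff ((Δ : ℤ) - 2 * i) := by
  classical
  let P : Finset (Σ _ : V, Finset V) :=
    Finset.univ.sigma (fun v => (G.neighborFinset v).powersetCard i)
  have hP : P.card = Fintype.card V * Δ.choose i := by
    simp only [P, Finset.card_sigma, Finset.card_powersetCard, G.card_neighborFinset_eq_degree]
    simp [hreg.degree_eq]
  have hmem : ∀ p ∈ P, p.2 ⊆ G.neighborFinset p.1 ∧ p.2.card = i := by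
    intro p hp
    simpa [P, Finset.mem_powersetCard] using hp
  let T : Finset (Finset V) := (Set.toFinite {S : Finset V |
    G.IsExactAlliance S ((Δ : ℤ) - 2 * i)}).toFinset
  have hT : G.allianceCoeff ((Δ : ℤ) - 2 * i) = T.card :=
    Set.ncard_eq_toFinset_card _ _
  rw [hT, ← hP]
  apply Finset.card_le_mul_card_image_of_maps_to (f := fun p => comp G p.2 p.1)
  · intro p hp
    obtain ⟨h1, h2⟩ := hmem p hp
    have := comp_alliance G hreg h1
    rw [h2] at this
    simpa [T] using this
  · intro S _
    rcases Finset.eq_empty_or_nonempty (P.filter (fun p => comp G p.2 p.1 = S)) with h0 | ⟨q, hq⟩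
    · rw [h0]; simp
    obtain ⟨hqP, hqS⟩ := Finset.mem_filter.1 hq
    obtain ⟨hq1, hq2⟩ := hmem q hqP
    have hqv : q.1 ∉ q.2 := fun h => by simpa using hq1 h
    have key : ∀ p ∈ P.filter (fun p => comp G p.2 p.1 = S),
        p.2 = q.2 ∧ p.1 ∈ S ∧ q.2 ⊆ G.neighborFinset p.1 := by
      intro p hp
      obtain ⟨hpP, hpS⟩ := Finset.mem_filter.1 hp
      obtain ⟨hp1, hp2⟩ := hmem p hpP
      have he := same_cut G hp1 hq1 (hp2.trans hq2.symm) (hpS.trans hqS.symm)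
      exact ⟨he, hpS ▸ self_mem_comp G, he ▸ hp1⟩
    have hinj : Set.InjOn Sigma.fst
        (P.filter (fun p => comp G p.2 p.1 = S) : Set (Σ _ : V, Finset V)) := by
      intro p hp p' hp' h
      have h1 := (key p (by simpa using hp)).1
      have h2 := (key p' (by simpa using hp')).1
      exact Sigma.ext h (heq_of_eq (h1.trans h2.symm))
    refine le_min ?_ ?_
    · obtain ⟨u, hu⟩ : q.2.Nonempty := Finset.card_pos.1 (by omega)
      rw [← hreg u, ← G.card_neighborFinset_eq_degree]
      refine Finset.card_le_card_of_injOn Sigma.fst ?_ (by simpa using hinj)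
      intro p hp
      have := (key p (by simpa using hp)).2.2 hu
      simpa [G.adj_comm] using this
    · rw [← hq2, ← Finset.card_compl]
      refine Finset.card_le_card_of_injOn Sigma.fst ?_ (by simpa using hinj)
      intro p hp
      have := (key p (by simpa using hp)).2.1
      rw [← hqS] at this
      simpa using comp_disjoint G hqv this

lemma bot_coeff {Δ : ℕ} (hreg : G.IsRegularOfDegree Δ) :
    G.allianceCoeff (-(Δ : ℤ)) = Fintype.card V := by
  have : {S : Finset V | G.IsExactAlliance S (-(Δ : ℤ))} =
      Set.range (fun v : V => ({v} : Finset V)) := by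
    ext S
    simp only [Set.mem_ofPred_eq, Set.mem_range]
    constructor
    · rintro ⟨hc, -, v, hv, hk⟩
      refine ⟨v, ?_⟩
      have h1 := deg_add G hreg S v
      have h0 : G.degIn S v = 0 := by omega
      rw [SimpleGraph.degIn, Finset.card_eq_zero, Finset.filter_eq_empty_iff] at h0
      symm
      rw [Finset.eq_singleton_iff_unique_mem]
      refine ⟨hv, fun w hw => ?_⟩
      obtain ⟨p⟩ := hc.preconnected ⟨v, hv⟩ ⟨w, hw⟩
      cases p with
      | nil => rfl
      | cons h _ => exact absurd h (h0 (by simp))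
    · rintro ⟨v, rfl⟩
      have h0 : G.degIn {v} v = 0 := by
        simp [SimpleGraph.degIn, Finset.filter_eq_empty_iff]
      have h1 := deg_add G hreg {v} v
      refine ⟨?_, ?_, v, by simp, by omega⟩
      · rw [Finset.coe_singleton]
        exact SimpleGraph.Connected.mk SimpleGraph.Preconnected.of_subsingleton
      · intro w hw
        rw [Finset.mem_singleton.1 hw]
        omega
  rw [SimpleGraph.allianceCoeff, this, ← Nat.card_coe_set_eq,
    Nat.card_range_of_injective Finset.singleton_injective, Nat.card_eq_fintype_card]

lemma coeff_ne_zero {Δ : ℕ} (hreg : G.IsRegularOfDegree Δ) {k : ℤ}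
    (h : G.allianceCoeff k ≠ 0) : ∃ i : ℕ, i ≤ Δ ∧ k = (Δ : ℤ) - 2 * i := by
  rw [SimpleGraph.allianceCoeff, ← Nat.pos_iff_ne_zero, Set.ncard_pos] at h
  obtain ⟨S, -, -, v, -, hk⟩ := h
  have := deg_add G hreg S v
  exact ⟨G.degOut S v, by omega, by omega⟩

lemma lt_card [Nonempty V] {Δ : ℕ} (hreg : G.IsRegularOfDegree Δ) : Δ < Fintype.card V := by
  obtain ⟨v⟩ := ‹Nonempty V›
  rw [← hreg v]
  exact G.degree_lt_card_verts v

lemma coeff_pos [Nonempty V] {Δ : ℕ} (hreg : G.IsRegularOfDegree Δ) {i : ℕ} (hi : i ≤ Δ) :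
    G.allianceCoeff ((Δ : ℤ) - 2 * i) ≠ 0 := by
  have hn := lt_card G hreg
  rcases Nat.eq_zero_or_pos i with rfl | h
  · have := top_coeff G hreg
    simp; omega
  · intro h0
    have := count G hreg h
    rw [h0] at this
    have h2 := Nat.choose_pos hi
    have : 0 < Fintype.card V * Δ.choose i := Nat.mul_pos (by omega) h2
    omega

lemma poly_eq [Nonempty V] {Δ : ℕ} (hreg : G.IsRegularOfDegree Δ) :
    G.alliancePoly = ∑ i ∈ Finset.range (Δ + 1),
      (G.allianceCoeff ((Δ : ℤ) - 2 * i) : ℝ) •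
        (Polynomial.X : Polynomial ℝ) ^ (((Fintype.card V : ℤ) + (Δ : ℤ) - 2 * i).toNat) := by
  have hmax : G.maxDegree = Δ := hreg.maxDegree_eq
  rw [SimpleGraph.alliancePoly, hmax]
  symm
  apply Finset.sum_of_injOn (fun i : ℕ => (Δ : ℤ) - 2 * i)
  · intro a _ b _ h
    simp at h
    omega
  · intro a ha
    simp at ha ⊢
    omega
  · intro k _ hk
    by_contra hne
    have hk0 : G.allianceCoeff k ≠ 0 := by
      intro h
      simp [h] at hne
    obtain ⟨i, hi, rfl⟩ := coeff_ne_zero G hreg hk0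
    exact hk ⟨i, by simp; omega, rfl⟩
  · intro i _
    simp only [add_sub_assoc]

lemma support_card [Nonempty V] {Δ : ℕ} (hreg : G.IsRegularOfDegree Δ) :
    G.alliancePoly.support.card = Δ + 1 := by
  have hn := lt_card G hreg
  let e : ℕ → ℕ := fun i => ((Fintype.card V : ℤ) + (Δ : ℤ) - 2 * i).toNat
  have he : Set.InjOn e (Finset.range (Δ + 1)) := by
    intro a ha b hb h
    simp only [e, Finset.coe_range, Set.mem_Iio] at ha hb h
    omega
  have : G.alliancePoly.support = (Finset.range (Δ + 1)).image e := by
    ext m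
    rw [Polynomial.mem_support_iff, poly_eq G hreg, Polynomial.finsetSum_coeff]
    simp only [Polynomial.coeff_smul, Polynomial.coeff_X_pow, smul_eq_mul, mul_ite, mul_one,
      mul_zero, Finset.mem_image]
    constructor
    · intro h
      obtain ⟨i, hi, hne⟩ := Finset.exists_ne_zero_of_sum_ne_zero h
      refine ⟨i, hi, ?_⟩
      by_contra hm
      exact hne (if_neg (fun h => hm h.symm))
    · rintro ⟨i, hi, rfl⟩
      rw [Finset.sum_eq_single_of_mem i hi]
      · rw [if_pos rfl]
        exact_mod_cast coeff_pos G hreg (by simp at hi; omega)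
      · intro j hj hji
        rw [if_neg]
        intro h
        exact hji (he hj hi h.symm)
  rw [this, Finset.card_image_of_injOn he, Finset.card_range]

end AllianceAux

/-- For a Δ-regular graph of order `n ≥ 1`, `A(G;x)` has exactly `Δ+1` nonzero
coefficients, `A(G;x) = Σ_{i=0}^{Δ} A_{Δ-2i}(G) x^{n+Δ-2i}`, `A_{-Δ}(G) = n`, `A_Δ(G) ≥ 1`,
and if `Δ > 0` then `A_{Δ-2i}(G) ≥ n·C(Δ,i)/min{Δ, n-i}` for `1 ≤ i ≤ Δ-1`. -/
theorem alliancePoly_regular_form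
    {V : Type*} [Fintype V] [DecidableEq V] [Nonempty V]
    (G : SimpleGraph V) [DecidableRel G.Adj] (Δ : ℕ)
    (hreg : G.IsRegularOfDegree Δ) :
    G.alliancePoly.support.card = Δ + 1 ∧
    G.alliancePoly = ∑ i ∈ Finset.range (Δ + 1),
      (G.allianceCoeff ((Δ : ℤ) - 2 * i) : ℝ) •
        (Polynomial.X : Polynomial ℝ) ^ (((Fintype.card V : ℤ) + (Δ : ℤ) - 2 * i).toNat) ∧
    G.allianceCoeff (-(Δ : ℤ)) = Fintype.card V ∧
    1 ≤ G.allianceCoeff (Δ : ℤ) ∧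
    (0 < Δ → ∀ i : ℕ, 1 ≤ i → i ≤ Δ - 1 →
      ((Fintype.card V : ℚ) * (Δ.choose i : ℚ)) / (min Δ (Fintype.card V - i) : ℚ) ≤
        (G.allianceCoeff ((Δ : ℤ) - 2 * i) : ℚ)) := by
  refine ⟨AllianceAux.support_card G hreg, AllianceAux.poly_eq G hreg,
    AllianceAux.bot_coeff G hreg, AllianceAux.top_coeff G hreg, ?_⟩
  intro hΔ i hi1 hi2
  have hn := AllianceAux.lt_card G hreg
  have hcount := AllianceAux.count G hreg hi1
  have hm : (min (Δ : ℚ) ((Fintype.card V : ℚ) - i)) =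
      ((min Δ (Fintype.card V - i) : ℕ) : ℚ) := by
    rw [Nat.cast_min, Nat.cast_sub (by omega)]
  have hpos : 0 < min Δ (Fintype.card V - i) := by
    rw [lt_min_iff]; omega
  rw [hm, div_le_iff₀ (by exact_mod_cast hpos), mul_comm (G.allianceCoeff _ : ℚ)]
  exact_mod_cast hcount
end

section
/- Let G be a Δ-regular connected finite simple graph of order n, and let G* be a finite simple graph of order n₁ with minimum degree δ₁ and maximum degree Δ₁. If A(G*;x) = A(G;x) as polynomials, then G* is connected, G* has exactly n vertices of degree Δ₁, Δ₁ = Δ + n₁ − n, n₁ ≥ n, Δ₁ ≥ Δ, and δ₁ ≡ Δ₁ (mod 2). Furthermore, if n₁ > n, then (Δ₁ + δ₁ + 2)/2 ≤ Δ, δ₁ + 2 < Δ < Δ₁, Δ + 1 ≤ Δ₁ ≤ 2Δ − 3, and δ₁ + 4 ≤ Δ₁. -/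
open Polynomial Finset

namespace AllianceAux

variable {V : Type*} [Fintype V] [DecidableEq V] (G : SimpleGraph V) [DecidableRel G.Adj]

lemma degIn_add_degOut (S : Finset V) (v : V) : G.degIn S v + G.degOut S v = G.degree v := by
  unfold SimpleGraph.degIn SimpleGraph.degOut
  rw [← SimpleGraph.card_neighborFinset_eq_degree, ← Finset.card_union_of_disjoint]
  · congr 1
    ext u
    simp
    tauto
  · exact Finset.disjoint_filter_filter disjoint_compl_right

variable {G}

lemma exact_bounds {S : Finset V} {k : ℤ} (h : G.IsExactAlliance S k) :
    -(G.maxDegree : ℤ) ≤ k ∧ k ≤ G.maxDegree := by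
  obtain ⟨-, -, v, hv, rfl⟩ := h
  have h1 := degIn_add_degOut G S v
  have h2 := G.degree_le_maxDegree v
  omega

lemma coeff_ne_zero_iff {k : ℤ} :
    G.allianceCoeff k ≠ 0 ↔ ∃ S, G.IsExactAlliance S k := by
  unfold SimpleGraph.allianceCoeff
  rw [← Nat.pos_iff_ne_zero, Set.ncard_pos (Set.toFinite _)]
  rfl

lemma maxDegree_le_card : G.maxDegree ≤ Fintype.card V :=
  G.maxDegree_le_of_forall_degree_le _ fun v => (G.degree_lt_card_verts v).le

lemma coeff_poly (m : ℕ) :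
    G.alliancePoly.coeff m = G.allianceCoeff ((m : ℤ) - Fintype.card V) := by
  unfold SimpleGraph.alliancePoly
  have hle := maxDegree_le_card (G := G)
  rw [Polynomial.finsetSum_coeff]
  simp only [Polynomial.coeff_smul, Polynomial.coeff_X_pow, smul_eq_mul, mul_ite, mul_one,
    mul_zero]
  rw [Finset.sum_eq_single ((m : ℤ) - Fintype.card V)]
  · rw [if_pos]
    omega
  · intro b hb hne
    rw [Finset.mem_Icc] at hb
    rw [if_neg]
    omega
  · intro hn
    rw [if_pos (by omega)]
    by_contra hc
    have hc' : G.allianceCoeff ((m : ℤ) - Fintype.card V) ≠ 0 := by exact_mod_cast hc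
    obtain ⟨S, hS⟩ := coeff_ne_zero_iff.1 hc'
    exact hn (Finset.mem_Icc.2 (exact_bounds hS))

lemma exists_exact {S : Finset V} (hS : (G.induce (S : Set V)).Connected) :
    ∃ k, G.IsExactAlliance S k := by
  have hne : S.Nonempty := by
    obtain ⟨v, hv⟩ := hS.nonempty
    exact ⟨v, hv⟩
  obtain ⟨v, hv, hmin⟩ := S.exists_min_image
    (fun v => (G.degIn S v : ℤ) - (G.degOut S v : ℤ)) hne
  exact ⟨_, hS, hmin, v, hv, rfl⟩

lemma singleton_connected (v : V) : (G.induce ((({v} : Finset V)) : Set V)).Connected := by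
  rw [Finset.coe_singleton]
  exact (SimpleGraph.connected_iff _).2
    ⟨SimpleGraph.Preconnected.of_subsingleton, ⟨⟨v, rfl⟩⟩⟩

lemma singleton_exact (v : V) : G.IsExactAlliance {v} (-(G.degree v : ℤ)) := by
  have h0 : G.degIn {v} v = 0 := by
    unfold SimpleGraph.degIn
    rw [Finset.card_eq_zero, Finset.filter_eq_empty_iff]
    intro u hu
    rw [Finset.mem_singleton] at hu
    subst hu
    exact G.irrefl
  have h1 := degIn_add_degOut G {v} v
  refine ⟨singleton_connected v, ?_, v, by simp, ?_⟩
  · intro u hu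
    rw [Finset.mem_singleton] at hu
    subst hu
    omega
  · omega

lemma degIn_pos {S : Finset V} (hS : (G.induce (S : Set V)).Connected) {u v : V}
    (hu : u ∈ S) (hv : v ∈ S) (huv : u ≠ v) : 0 < G.degIn S v := by
  have : Nontrivial (S : Set V) := ⟨⟨u, hu⟩, ⟨v, hv⟩, by simpa using huv⟩
  obtain ⟨w, hw⟩ := hS.preconnected.exists_adj_of_nontrivial ⟨v, hv⟩
  unfold SimpleGraph.degIn
  rw [Finset.card_pos]
  exact ⟨w, Finset.mem_filter.2 ⟨w.2, hw⟩⟩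

lemma coeff_neg_max :
    G.allianceCoeff (-(G.maxDegree : ℤ)) =
      (Finset.univ.filter (fun v : V => G.degree v = G.maxDegree)).card := by
  have : {S : Finset V | G.IsExactAlliance S (-(G.maxDegree : ℤ))} =
      ((Finset.univ.filter (fun v : V => G.degree v = G.maxDegree)).image
        (fun v => ({v} : Finset V)) : Finset (Finset V)) := by
    ext S
    simp only [Set.mem_ofPred_eq, Finset.coe_image, Set.mem_image, Finset.mem_coe,
      Finset.mem_filter, Finset.mem_univ, true_and]
    constructor
    · rintro ⟨hc, -, v, hv, hk⟩
      have h1 := degIn_add_degOut G S v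
      have h2 := G.degree_le_maxDegree v
      refine ⟨v, by omega, ?_⟩
      ext u
      rw [Finset.mem_singleton]
      constructor
      · rintro rfl
        exact hv
      · intro hu
        by_contra hne
        have := degIn_pos hc hu hv hne
        omega
    · rintro ⟨v, hv, rfl⟩
      rw [← hv]
      exact singleton_exact v
  unfold SimpleGraph.allianceCoeff
  rw [this, Set.ncard_coe_finset, Finset.card_image_of_injective]
  exact Finset.singleton_injective

lemma closed_eq_univ (hG : G.Connected) {S : Finset V} (hne : S.Nonempty)
    (hcl : ∀ v ∈ S, ∀ w, G.Adj v w → w ∈ S) : S = Finset.univ := by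
  obtain ⟨u, hu⟩ := hne
  have key : ∀ a b, G.Walk a b → a ∈ S → b ∈ S := by
    intro a b p
    induction p with
    | nil => exact id
    | cons hadj _ ih => exact fun ha => ih (hcl _ ha _ hadj)
  rw [Finset.eq_univ_iff_forall]
  intro w
  obtain ⟨p⟩ := hG.preconnected u w
  exact key _ _ p hu

lemma degIn_univ (v : V) : G.degIn Finset.univ v = G.degree v := by
  have h := degIn_add_degOut G Finset.univ v
  have : G.degOut Finset.univ v = 0 := by simp [SimpleGraph.degOut]
  omega

lemma univ_exact (hG : G.Connected) : G.IsExactAlliance Finset.univ (G.minDegree : ℤ) := by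
  have := hG.nonempty
  refine ⟨?_, ?_, ?_⟩
  · rw [Finset.coe_univ]
    exact (SimpleGraph.induceUnivIso G).connected_iff.2 hG
  · intro v _
    have h := degIn_add_degOut G Finset.univ v
    have h2 := degIn_univ (G := G) v
    have h3 := G.minDegree_le_degree v
    omega
  · obtain ⟨v, hv⟩ := G.exists_minimal_degree_vertex
    have h := degIn_add_degOut G Finset.univ v
    have h2 := degIn_univ (G := G) v
    exact ⟨v, Finset.mem_univ _, by omega⟩

lemma regular_top (hG : G.Connected) {Δ : ℕ} (hreg : G.IsRegularOfDegree Δ) {S : Finset V}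
    (hS : G.IsExactAlliance S Δ) : S = Finset.univ := by
  obtain ⟨-, hk, w, hw, -⟩ := hS
  refine closed_eq_univ hG ⟨w, hw⟩ ?_
  intro v hv u hu
  by_contra hn
  have h1 := degIn_add_degOut G S v
  have h2 := hk v hv
  have h3 := hreg v
  have h4 : 0 < G.degOut S v := by
    unfold SimpleGraph.degOut
    rw [Finset.card_pos]
    exact ⟨u, by simp [hn, hu]⟩
  omega

/-- A maximal connected subset of `M` containing `u`. -/
lemma exists_component (M : Finset V) {u : V} (hu : u ∈ M) :
    ∃ S : Finset V, S ⊆ M ∧ u ∈ S ∧ (G.induce (S : Set V)).Connected ∧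
      ∀ v ∈ S, ∀ w ∈ M, G.Adj v w → w ∈ S := by
  classical
  obtain ⟨S, hS, hmax⟩ := (M.powerset.filter
    (fun S : Finset V => u ∈ S ∧ (G.induce (S : Set V)).Connected)).exists_max_image Finset.card
    ⟨{u}, by simpa [hu] using singleton_connected (G := G) u⟩
  simp only [Finset.mem_filter, Finset.mem_powerset] at hS hmax
  obtain ⟨hSM, huS, hc⟩ := hS
  refine ⟨S, hSM, huS, hc, ?_⟩
  intro v hv w hw hvw
  by_contra hn
  have hcon : (G.induce ((insert w S : Finset V) : Set V)).Connected := by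
    have h1 := SimpleGraph.induce_union_connected hc.preconnected
      (SimpleGraph.induce_pair_connected_of_adj hvw).preconnected ⟨v, by simpa using hv⟩
    have h2 : ((insert w S : Finset V) : Set V) = (S : Set V) ∪ {v, w} := by
      ext x
      simp only [Finset.coe_insert, Set.mem_insert_iff, Finset.mem_coe, Set.mem_union,
        Set.mem_singleton_iff]
      constructor
      · tauto
      · rintro (h | rfl | h)
        · exact Or.inr h
        · exact Or.inr hv
        · exact Or.inl h
    rw [h2]
    exact h1
  have := hmax (insert w S) ⟨Finset.insert_subset hw hSM, Finset.mem_insert_of_mem huS, hcon⟩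
  rw [Finset.card_insert_of_notMem hn] at this
  omega

end AllianceAux

open AllianceAux

/-- If a graph `G*` (order `n₁`, min degree `δ₁`, max degree `Δ₁`) has the same
alliance polynomial as a connected Δ-regular graph `G` of order `n`, then `G*` is connected
with exactly `n` vertices of degree `Δ₁`, `Δ₁ = Δ + n₁ - n`, `n₁ ≥ n`, `Δ₁ ≥ Δ`,
`δ₁ ≡ Δ₁ (mod 2)`, and if moreover `n₁ > n` then `(Δ₁+δ₁+2)/2 ≤ Δ`, `δ₁+2 < Δ < Δ₁`,
`Δ+1 ≤ Δ₁ ≤ 2Δ-3` and `δ₁+4 ≤ Δ₁`. -/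
theorem alliancePoly_eq_regular_connected_characterization
    {V W : Type*} [Fintype V] [DecidableEq V] [Fintype W] [DecidableEq W]
    (G : SimpleGraph V) [DecidableRel G.Adj] (Δ : ℕ)
    (hreg : G.IsRegularOfDegree Δ) (hconn : G.Connected)
    (Gs : SimpleGraph W) [DecidableRel Gs.Adj]
    (h : Gs.alliancePoly = G.alliancePoly) :
    Gs.Connected ∧
    (Finset.univ.filter (fun v : W => Gs.degree v = Gs.maxDegree)).card = Fintype.card V ∧
    (Gs.maxDegree : ℤ) = (Δ : ℤ) + (Fintype.card W : ℤ) - (Fintype.card V : ℤ) ∧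
    Fintype.card V ≤ Fintype.card W ∧
    Δ ≤ Gs.maxDegree ∧
    Gs.minDegree ≡ Gs.maxDegree [MOD 2] ∧
    (Fintype.card V < Fintype.card W →
      ((Gs.maxDegree : ℚ) + (Gs.minDegree : ℚ) + 2) / 2 ≤ (Δ : ℚ) ∧
      Gs.minDegree + 2 < Δ ∧ Δ < Gs.maxDegree ∧
      Δ + 1 ≤ Gs.maxDegree ∧ (Gs.maxDegree : ℤ) ≤ 2 * (Δ : ℤ) - 3 ∧
      Gs.minDegree + 4 ≤ Gs.maxDegree) := by
  have hcoef : ∀ k : ℤ, 0 ≤ k → Gs.allianceCoeff (k - Fintype.card W) =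
      G.allianceCoeff (k - Fintype.card V) := by
    intro k hk
    lift k to ℕ using hk
    have h1 := coeff_poly (G := Gs) k
    rw [h, coeff_poly] at h1
    exact_mod_cast h1.symm
  have : Nonempty V := hconn.nonempty
  have hGmax : G.maxDegree = Δ := by
    obtain ⟨v, hv⟩ := G.exists_maximal_degree_vertex
    rw [hv]
    exact hreg v
  have hΔn : Δ ≤ Fintype.card V := hGmax ▸ maxDegree_le_card (G := G)
  have hΔ1n : Gs.maxDegree ≤ Fintype.card W := maxDegree_le_card
  have hGneg : G.allianceCoeff (-(Δ : ℤ)) = Fintype.card V := by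
    have := coeff_neg_max (G := G)
    rw [hGmax] at this
    rw [this, Finset.filter_true_of_mem (fun v _ => hreg v), Finset.card_univ]
  have hcard : 0 < Fintype.card V := Fintype.card_pos
  have h1 : Gs.allianceCoeff (((Fintype.card V : ℤ) - Δ) - Fintype.card W) = Fintype.card V := by
    rw [hcoef _ (by omega), ← hGneg]
    congr 1
    ring
  obtain ⟨S0, hS0⟩ := coeff_ne_zero_iff.1 (h1.trans_ne hcard.ne')
  have : Nonempty W := by
    obtain ⟨-, -, v, -, -⟩ := hS0
    exact ⟨v⟩
  have hb0 := (exact_bounds hS0).1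
  -- transfer of alliances
  have htr : ∀ (S : Finset W) (k : ℤ), Gs.IsExactAlliance S k →
      k + Fintype.card W - Fintype.card V ≤ Δ ∧
      -(Δ : ℤ) ≤ k + Fintype.card W - Fintype.card V ∧
      2 ∣ (k + Fintype.card W - Fintype.card V - Δ) := by
    intro S k hS
    have hb := exact_bounds hS
    have hne := coeff_ne_zero_iff.2 ⟨S, hS⟩
    have h2 := hcoef (k + Fintype.card W) (by omega)
    rw [add_sub_cancel_right] at h2
    rw [h2] at hne
    obtain ⟨T, hT⟩ := coeff_ne_zero_iff.1 hne
    have hbT := exact_bounds hT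
    obtain ⟨-, -, v, hv, hvk⟩ := hT
    have h3 := degIn_add_degOut G T v
    have h4 := hreg v
    rw [hGmax] at hbT
    omega
  obtain ⟨vM, hvM⟩ := Gs.exists_maximal_degree_vertex
  obtain ⟨vm, hvm⟩ := Gs.exists_minimal_degree_vertex
  have hM := htr _ _ (singleton_exact vM)
  have hm := htr _ _ (singleton_exact vm)
  rw [← hvM] at hM
  rw [← hvm] at hm
  have hΔ1 : (Gs.maxDegree : ℤ) = (Δ : ℤ) + (Fintype.card W : ℤ) - (Fintype.card V : ℤ) := by
    omega
  have hnum : (Finset.univ.filter (fun v : W => Gs.degree v = Gs.maxDegree)).card =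
      Fintype.card V := by
    rw [← coeff_neg_max, ← h1]
    congr 1
    omega
  have hle : Fintype.card V ≤ Fintype.card W := by
    rw [← hnum]
    exact Finset.card_le_univ _
  have huniq : ∀ S T : Finset W, Gs.IsExactAlliance S (2 * (Δ : ℤ) - Gs.maxDegree) →
      Gs.IsExactAlliance T (2 * (Δ : ℤ) - Gs.maxDegree) → S = T := by
    intro S T hS hT
    have h2 := hcoef ((Fintype.card V : ℤ) + Δ) (by omega)
    have e1 : (Fintype.card V : ℤ) + Δ - Fintype.card W = 2 * (Δ : ℤ) - Gs.maxDegree := by omega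
    have e2 : (Fintype.card V : ℤ) + Δ - Fintype.card V = Δ := by omega
    rw [e1, e2] at h2
    have h3 : G.allianceCoeff (Δ : ℤ) ≤ 1 := by
      unfold SimpleGraph.allianceCoeff
      rw [Set.ncard_le_one (Set.toFinite _)]
      intro A hA B hB
      rw [regular_top hconn hreg hA, regular_top hconn hreg hB]
    rw [← h2] at h3
    unfold SimpleGraph.allianceCoeff at h3
    rw [Set.ncard_le_one (Set.toFinite _)] at h3
    exact h3 S hS T hT
  set M := Finset.univ.filter (fun v : W => Gs.degree v = Gs.maxDegree) with hMdef
  have hMc : Mᶜ.card = Fintype.card W - Fintype.card V := by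
    rw [Finset.card_compl, hnum]
  have hcomp : ∀ u ∈ M, ∃ S : Finset W, S ⊆ M ∧ u ∈ S ∧
      Gs.IsExactAlliance S (2 * (Δ : ℤ) - Gs.maxDegree) ∧
      ∃ v ∈ S, ∀ w, w ∉ M → Gs.Adj v w := by
    intro u hu
    obtain ⟨S, hSM, huS, hSc, hcl⟩ := exists_component (G := Gs) M hu
    obtain ⟨k, hk⟩ := exists_exact hSc
    have hsub : ∀ v ∈ S, Sᶜ.filter (fun u => Gs.Adj v u) ⊆ Mᶜ := by
      intro v hv w hw
      rw [Finset.mem_filter, Finset.mem_compl] at hw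
      rw [Finset.mem_compl]
      exact fun hwM => hw.1 (hcl v hv w hwM hw.2)
    have hup := (htr S k hk).1
    have hk' := hk
    obtain ⟨-, -, v, hv, hvk⟩ := hk'
    have h2 := degIn_add_degOut Gs S v
    have h3 : Gs.degree v = Gs.maxDegree := (Finset.mem_filter.1 (hSM hv)).2
    have h4 : Gs.degOut S v ≤ Mᶜ.card := Finset.card_le_card (hsub v hv)
    have hkeq : k = 2 * (Δ : ℤ) - Gs.maxDegree := by omega
    refine ⟨S, hSM, huS, hkeq ▸ hk, v, hv, ?_⟩
    have h5 : Mᶜ.card ≤ Gs.degOut S v := by omega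
    have h6 := Finset.eq_of_subset_of_card_le (hsub v hv) h5
    intro w hw
    have : w ∈ Sᶜ.filter (fun u => Gs.Adj v u) := by
      rw [h6]
      exact Finset.mem_compl.2 hw
    exact (Finset.mem_filter.1 this).2
  have hvMM : vM ∈ M := by simp [hMdef, hvM]
  obtain ⟨S, hSM, -, hSe, v, hv, hadj⟩ := hcomp vM hvMM
  have hMS : M ⊆ S := by
    intro u hu
    obtain ⟨T, -, huT, hTe, -⟩ := hcomp u hu
    rw [huniq S T hSe hTe]
    exact huT
  have hconn' : Gs.Connected := by
    rw [SimpleGraph.connected_iff_exists_forall_reachable]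
    refine ⟨v, fun w => ?_⟩
    by_cases hw : w ∈ M
    · have := hSe.1.preconnected ⟨v, hv⟩ ⟨w, hMS hw⟩
      exact this.map (SimpleGraph.Embedding.induce _).toHom
    · exact (hadj w hw).reachable
  refine ⟨hconn', hnum, hΔ1, hle, by omega, ?_, ?_⟩
  · unfold Nat.ModEq
    omega
  · intro hlt
    have hu := htr _ _ (univ_exact hconn')
    have hne : (Gs.minDegree : ℤ) ≠ 2 * (Δ : ℤ) - Gs.maxDegree := by
      intro he
      have h2 := huniq S Finset.univ hSe (he ▸ univ_exact hconn')
      have h3 : M = Finset.univ := Finset.Subset.antisymm (Finset.subset_univ _) (h2 ▸ hSM)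
      rw [h3, Finset.card_univ] at hnum
      omega
    have : Nontrivial W := Fintype.one_lt_card_iff_nontrivial.1 (by omega)
    have hpos := hconn'.preconnected.minDegree_pos_of_nontrivial
    have hmain : Gs.maxDegree + Gs.minDegree + 2 ≤ 2 * Δ := by omega
    have hmainQ : (Gs.maxDegree : ℚ) + (Gs.minDegree : ℚ) + 2 ≤ 2 * (Δ : ℚ) := by
      exact_mod_cast hmain
    refine ⟨by linarith, ?_, ?_, ?_, ?_, ?_⟩ <;> omega
end
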